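/- arXiv:2408.06616 — 5 statements merged into one kernel-verified Lean document; each statement's English description precedes it below -/
import Mathlib

section
/- Conversely, if the quantum product is associative, i.e. (T_i * T_j) * T_k = T_i * (T_j * T_k) for all indices i, j, k in ι, then Φ satisfies the WDVV equation: for all i, j, k, l, ∑_{e,f} Φ i j e · g' e f · Φ f k l = ∑_{e,f} Φ i k e · g' e f · Φ f j l. -/
open Finset

/-!
On basis vectors, `(T i * T j) * T k` has coordinate vector `W i j k ᵥ* g'`, where
`W i j k l = ∑ e f, Φ i j e * g' e f * Φ f k l`. Basis vectors commute with everything, so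
`T i * (T j * T k) = (T j * T k) * T i` has coordinate vector `W j k i ᵥ* g'`. As `g'` is
nondegenerate, associativity says that `W` is invariant under rotating `i, j, k`. A rotation
composed with the symmetry of `W` in `i, j` exchanges `j` and `k`, which is WDVV.
-/

open Matrix

section QuantumProduct

variable {K ι : Type*} [Semiring K] [Fintype ι]

/-- The quantum product on `ι → K` with structure tensor `Φ` (the third derivatives of the
potential), whose last index is raised by the inverse metric `h`. It is given in coordinates rather
than as a bilinear map because `K` need not be commutative. -/
def quantumMul (Φ : ι → ι → ι → K) (h : Matrix ι ι K) (x y : ι → K) : ι → K :=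
  fun p => ∑ i, ∑ j, ∑ e, x i * y j * (Φ i j e * h e p)

/-- The contraction of two copies of `Φ` through the inverse metric `h`. The two sides of the WDVV
equation are its values at `i, j, k, l` and at `i, k, j, l`. -/
def wdvvContraction (Φ : ι → ι → ι → K) (h : Matrix ι ι K) (i j k l : ι) : K :=
  ∑ e, ∑ f, Φ i j e * h e f * Φ f k l

variable {Φ : ι → ι → ι → K} {h : Matrix ι ι K}

theorem quantumMul_eq_vecMul (x y : ι → K) :
    quantumMul Φ h x y = (fun e => ∑ i, ∑ j, x i * y j * Φ i j e) ᵥ* h := by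
  ext p
  simp only [quantumMul, vecMul, dotProduct, sum_mul, mul_assoc]
  exact (sum_congr rfl fun _ _ => sum_comm).trans sum_comm

theorem wdvvContraction_eq_vecMul (i j k : ι) :
    wdvvContraction Φ h i j k = (Φ i j ᵥ* h) ᵥ* of fun f => Φ f k := by
  ext l
  simp only [wdvvContraction, vecMul, dotProduct, of_apply, sum_mul]
  exact sum_comm

theorem wdvvContraction_swap {i j : ι} (hΦ : Φ i j = Φ j i) (k : ι) :
    wdvvContraction Φ h i j k = wdvvContraction Φ h j i k := by
  simp only [wdvvContraction_eq_vecMul, hΦ]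

variable [DecidableEq ι]

theorem quantumMul_single_one_right (x : ι → K) (k : ι) :
    quantumMul Φ h x (Pi.single k 1) = (x ᵥ* of fun i => Φ i k) ᵥ* h := by
  rw [quantumMul_eq_vecMul]
  congr 1
  ext e
  simp [vecMul, dotProduct, Pi.single_apply]

theorem quantumMul_single_one_left (i : ι) (y : ι → K) :
    quantumMul Φ h (Pi.single i 1) y = (y ᵥ* of (Φ i)) ᵥ* h := by
  rw [quantumMul_eq_vecMul]
  congr 1
  ext e
  simp [vecMul, dotProduct, Pi.single_apply]

theorem quantumMul_single_one_comm {i : ι} (hΦ : ∀ j, Φ i j = Φ j i) (x : ι → K) :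
    quantumMul Φ h (Pi.single i 1) x = quantumMul Φ h x (Pi.single i 1) := by
  rw [quantumMul_single_one_left, quantumMul_single_one_right, funext hΦ]

theorem quantumMul_single_one_single_one (i j : ι) :
    quantumMul Φ h (Pi.single i 1) (Pi.single j 1) = Φ i j ᵥ* h := by
  rw [quantumMul_single_one_right, single_one_vecMul]
  rfl

theorem quantumMul_quantumMul_single_one (i j k : ι) :
    quantumMul Φ h (quantumMul Φ h (Pi.single i 1) (Pi.single j 1)) (Pi.single k 1) =
      wdvvContraction Φ h i j k ᵥ* h := by
  rw [quantumMul_single_one_single_one, quantumMul_single_one_right, wdvvContraction_eq_vecMul]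

theorem quantumMul_single_one_assoc_iff (hh : Function.Injective h.vecMul)
    {i : ι} (hΦ : ∀ j, Φ i j = Φ j i) (j k : ι) :
    quantumMul Φ h (quantumMul Φ h (Pi.single i 1) (Pi.single j 1)) (Pi.single k 1) =
        quantumMul Φ h (Pi.single i 1) (quantumMul Φ h (Pi.single j 1) (Pi.single k 1)) ↔
      wdvvContraction Φ h i j k = wdvvContraction Φ h j k i := by
  rw [quantumMul_quantumMul_single_one i j k, quantumMul_single_one_comm hΦ,
    quantumMul_quantumMul_single_one j k i]
  exact hh.eq_iff

theorem associativity_implies_wdvv_general (hh : Function.Injective h.vecMul)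
    (hΦ : ∀ i j, Φ i j = Φ j i)
    (assoc : ∀ i j k,
      quantumMul Φ h (quantumMul Φ h (Pi.single i 1) (Pi.single j 1)) (Pi.single k 1) =
        quantumMul Φ h (Pi.single i 1) (quantumMul Φ h (Pi.single j 1) (Pi.single k 1)))
    (i j k l : ι) :
    wdvvContraction Φ h i j k l = wdvvContraction Φ h i k j l := by
  have contraction_eq : wdvvContraction Φ h i j k = wdvvContraction Φ h i k j :=
    calc
      wdvvContraction Φ h i j k = wdvvContraction Φ h j i k := wdvvContraction_swap (hΦ i j) k
      _ = wdvvContraction Φ h i k j :=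
        (quantumMul_single_one_assoc_iff hh (hΦ j) i k).1 (assoc j i k)
  exact congrFun contraction_eq l

end QuantumProduct

/-- **Associativity of the quantum product implies the WDVV equation.**
With the same setup as before (symmetric `g` with two-sided inverse `g'`, totally
symmetric `Φ`, quantum product `qmul` extended bilinearly from
`T i * T j = ∑ e f, Φ i j e * g' e f • T f` on the standard basis
`T i = Pi.single i 1`), if `qmul` is associative on basis vectors then `Φ`
satisfies the WDVV equation. -/
theorem associativity_implies_wdvv
    {K : Type*} [CommRing K] {ι : Type*} [Fintype ι] [DecidableEq ι]
    (g g' : ι → ι → K)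
    (hg : ∀ i j, g i j = g j i)
    (hgg' : ∀ i f, (∑ e, g i e * g' e f) = if i = f then (1 : K) else 0)
    (hg'g : ∀ i f, (∑ e, g' i e * g e f) = if i = f then (1 : K) else 0)
    (Φ : ι → ι → ι → K)
    (hΦ₁ : ∀ i j k, Φ i j k = Φ j i k)
    (hΦ₂ : ∀ i j k, Φ i j k = Φ i k j)
    (T : ι → (ι → K)) (hT : ∀ i, T i = Pi.single i 1)
    (qmul : (ι → K) → (ι → K) → (ι → K))
    (hqmul : ∀ x y p, qmul x y p = ∑ i, ∑ j, ∑ e, x i * y j * (Φ i j e * g' e p))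
    (assoc : ∀ i j k, qmul (qmul (T i) (T j)) (T k) = qmul (T i) (qmul (T j) (T k))) :
    ∀ i j k l,
      (∑ e, ∑ f, Φ i j e * g' e f * Φ f k l) = ∑ e, ∑ f, Φ i k e * g' e f * Φ f j l := by
  obtain rfl : T = fun i => Pi.single i 1 := funext hT
  obtain rfl : qmul = quantumMul Φ (of g') := by ext x y p; exact hqmul x y p
  have hg' : of g' * of g = 1 := by ext i j; simp [mul_apply, one_apply, hg'g]
  exact associativity_implies_wdvv_general
    (isRightRegular_iff_vecMul_injective.1 (isRightRegular_of_mul_eq_one hg'))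
    (fun i j => funext (hΦ₁ i j)) assoc
end

section
/- The 12 elements T_{ij} = aⁱHʲ for 0 ≤ i ≤ 3 and 0 ≤ j ≤ 2 form a ℚ-vector-space basis of R; in particular R has dimension 12 over ℚ. -/
/-!
A quotient `K[x, y]/(f(x), g(x, y))` with `f` monic, and `g` monic in `y`, is a tower of two
monogenic extensions: first adjoin a root `α` of `f` to `K`, then a root `β` of `g(α, y)` to `K[α]`.
The first step has basis `αⁱ` over `K`, the second `βʲ` over `K[α]`, so the products `αⁱβʲ` form a
basis over `K`. The ring `R` is the case `f = x⁴`, `g = y³ - xy² + x²y - x³`.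
-/

open MvPolynomial

noncomputable section

/-- The polynomial ring `ℚ[a, H]` in two variables. -/
abbrev P : Type := MvPolynomial (Fin 2) ℚ

/-- The variable `a` (hyperplane class of the Grassmannian). -/
def aP : P := X 0

/-- The variable `H` (pullback of the hyperplane class of `ℙ³`). -/
def HP : P := X 1

/-- The ideal `(a⁴, H³ − aH² + a²H − a³)`. -/
def J : Ideal P := Ideal.span {aP ^ 4, HP ^ 3 - aP * HP ^ 2 + aP ^ 2 * HP - aP ^ 3}

/-- The cohomology ring `R = ℚ[a,H]/(a⁴, H³ − aH² + a²H − a³)`. -/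
abbrev R : Type := P ⧸ J

/-- `T i j` is the image of `aⁱHʲ` in `R`. -/
def T (i j : ℕ) : R := Ideal.Quotient.mk J (aP ^ i * HP ^ j)

section TriangularQuotient

open scoped Polynomial Polynomial.Bivariate
open Polynomial.Bivariate (equivMvPolynomial)

section Evaluation

variable {K A : Type*} [CommSemiring K] [CommSemiring A] [Algebra K A]

lemma aevalAeval_eq_eval₂ (x y : A) (p : K[X][Y]) :
    p.aevalAeval x y = p.eval₂ (Polynomial.aeval (R := K) x).toRingHom y := by
  have h : Polynomial.aevalAeval x y =
      Polynomial.eval₂AlgHom (Polynomial.aeval (R := K) x) y fun _ => Commute.all _ _ := by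
    ext <;> simp
  exact DFunLike.congr_fun h p

lemma map_equivMvPolynomial (φ : MvPolynomial (Fin 2) K →ₐ[K] A) (p : K[X][Y]) :
    φ (equivMvPolynomial K p) = p.aevalAeval (φ (X 0)) (φ (X 1)) := by
  have h : φ.comp (equivMvPolynomial K).toAlgHom =
      Polynomial.aevalAeval (φ (X 0)) (φ (X 1)) := by
    ext <;> simp
  exact DFunLike.congr_fun h p

end Evaluation

lemma exists_basis_adjoinRoot_map {A B : Type*} [CommRing A] [CommRing B] (φ : A →+* B) {g : A[X]}
    (hg : g.Monic) :
    ∃ b : Module.Basis (Fin g.natDegree) B (AdjoinRoot (g.map φ)),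
      ∀ j, b j = AdjoinRoot.root (g.map φ) ^ j.val := by
  rcases subsingleton_or_nontrivial B with hB | hB
  -- Over the zero ring `g.map φ` has degree `0`, but every family is a basis.
  · have : Subsingleton (AdjoinRoot (g.map φ)) := Module.subsingleton B _
    exact ⟨.mk (v := fun j => AdjoinRoot.root (g.map φ) ^ j.val) linearIndependent_of_subsingleton
      (Subsingleton.elim _ _).le, fun _ => Subsingleton.elim _ _⟩
  · exact ⟨(AdjoinRoot.powerBasis' (hg.map φ)).basis.reindex (finCongr (hg.natDegree_map φ)),
      fun j => by rw [Module.Basis.reindex_apply, PowerBasis.basis_eq_pow]; rfl⟩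

variable {K : Type*} [CommRing K]

/-- The ideal `(f(x), g(x, y))` of `K[x, y]`, with `x = X 0` and `y = X 1`; the outer variable of
`g : K[X][Y]` is `y`. -/
def triangularIdeal (f : K[X]) (g : K[X][Y]) : Ideal (MvPolynomial (Fin 2) K) :=
  Ideal.span {equivMvPolynomial K (Polynomial.C f), equivMvPolynomial K g}

/-- The two-step extension `K[α][β]`, with `α` a root of `f` and `β` a root of `g(α, y)`. -/
abbrev RootTower (f : K[X]) (g : K[X][Y]) : Type _ :=
  AdjoinRoot (g.map (AdjoinRoot.mk f))

namespace RootTower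

variable (f : K[X]) (g : K[X][Y])

/-- The root `α` of `f` in `K[α][β]`. -/
def innerRoot : RootTower f g :=
  algebraMap (AdjoinRoot f) _ (AdjoinRoot.root f)

/-- The root `β` of `g(α, y)` in `K[α][β]`. -/
def outerRoot : RootTower f g :=
  AdjoinRoot.root _

lemma aeval_innerRoot_eq_zero : Polynomial.aeval (innerRoot f g) f = 0 := by
  rw [innerRoot, Polynomial.aeval_algebraMap_apply, AdjoinRoot.aeval_eq, AdjoinRoot.mk_self,
    map_zero]

lemma aevalAeval_roots (p : K[X][Y]) :
    p.aevalAeval (innerRoot f g) (outerRoot f g) =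
      AdjoinRoot.mk (g.map (AdjoinRoot.mk f)) (p.map (AdjoinRoot.mk f)) := by
  have h : Polynomial.aevalAeval (innerRoot f g) (outerRoot f g) =
      ((AdjoinRoot.mkₐ (g.map (AdjoinRoot.mk f))).restrictScalars K).comp
        (Polynomial.mapAlgHom (AdjoinRoot.mkₐ f)) := by
    ext <;> simp [innerRoot, outerRoot]
  exact DFunLike.congr_fun h p

lemma aevalAeval_roots_eq_zero : g.aevalAeval (innerRoot f g) (outerRoot f g) = 0 := by
  rw [aevalAeval_roots, AdjoinRoot.mk_self]

lemma aeval_roots_eq_zero_of_mem (p : MvPolynomial (Fin 2) K) (hp : p ∈ triangularIdeal f g) :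
    aeval ![innerRoot f g, outerRoot f g] p = 0 := by
  have h : triangularIdeal f g ≤ RingHom.ker (aeval (R := K) ![innerRoot f g, outerRoot f g]) := by
    rw [triangularIdeal, Ideal.span_le]
    rintro _ (rfl | rfl)
    · simpa [map_equivMvPolynomial] using aeval_innerRoot_eq_zero f g
    · simpa [map_equivMvPolynomial] using aevalAeval_roots_eq_zero f g
  exact h hp

variable {f g}

lemma exists_basis (hf : f.Monic) (hg : g.Monic) :
    ∃ b : Module.Basis (Fin f.natDegree × Fin g.natDegree) K (RootTower f g),
      ∀ p, b p = innerRoot f g ^ p.1.val * outerRoot f g ^ p.2.val := by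
  obtain ⟨c, hc⟩ := exists_basis_adjoinRoot_map (AdjoinRoot.mk f) hg
  obtain ⟨b, hb⟩ : ∃ b : Module.Basis (Fin f.natDegree) K (AdjoinRoot f),
      ∀ i, b i = AdjoinRoot.root f ^ i.val :=
    ⟨(AdjoinRoot.powerBasis' hf).basis, (AdjoinRoot.powerBasis' hf).basis_eq_pow⟩
  refine ⟨b.smulTower c, fun p => ?_⟩
  rw [Module.Basis.smulTower_apply, hb, hc, Algebra.smul_def, map_pow]
  rfl

section Lift

variable {A : Type*} [CommRing A] [Algebra K A] {x y : A}

/-- The universal property of `K[α][β]`: a pair `(x, y)` with `f(x) = 0` and `g(x, y) = 0` gives an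
algebra map with `α ↦ x` and `β ↦ y`. -/
def lift (hx : Polynomial.aeval x f = 0) (hy : g.aevalAeval x y = 0) : RootTower f g →ₐ[K] A :=
  AdjoinRoot.liftAlgHom _ (AdjoinRoot.liftAlgHom f (Algebra.ofId K A) x hx) y <| by
    rw [Polynomial.eval₂_map, ← hy, aevalAeval_eq_eval₂]
    rfl

variable (hx : Polynomial.aeval x f = 0) (hy : g.aevalAeval x y = 0)

@[simp]
lemma lift_innerRoot : lift hx hy (innerRoot f g) = x := by
  rw [lift, innerRoot, AdjoinRoot.algebraMap_eq, AdjoinRoot.liftAlgHom_of]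
  exact AdjoinRoot.liftAlgHom_root ..

@[simp]
lemma lift_outerRoot : lift hx hy (outerRoot f g) = y :=
  AdjoinRoot.liftAlgHom_root ..

end Lift

lemma algHom_ext {A : Type*} [CommRing A] [Algebra K A] {φ ψ : RootTower f g →ₐ[K] A}
    (hα : φ (innerRoot f g) = ψ (innerRoot f g)) (hβ : φ (outerRoot f g) = ψ (outerRoot f g)) :
    φ = ψ :=
  AdjoinRoot.algHom_ext' (AdjoinRoot.algHom_ext hα) hβ

end RootTower

variable (f : K[X]) (g : K[X][Y])

lemma aeval_mk_X_eq_zero :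
    Polynomial.aeval (Ideal.Quotient.mkₐ K (triangularIdeal f g) (X 0)) f = 0 := by
  rw [← Polynomial.aevalAeval_C _ (Ideal.Quotient.mkₐ K (triangularIdeal f g) (X 1)),
    ← map_equivMvPolynomial]
  exact Ideal.Quotient.eq_zero_iff_mem.mpr (Ideal.subset_span (.inl rfl))

lemma aevalAeval_mk_X_eq_zero :
    g.aevalAeval (Ideal.Quotient.mkₐ K (triangularIdeal f g) (X 0))
      (Ideal.Quotient.mkₐ K (triangularIdeal f g) (X 1)) = 0 := by
  rw [← map_equivMvPolynomial]
  exact Ideal.Quotient.eq_zero_iff_mem.mpr (Ideal.subset_span (.inr rfl))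

/-- The algebra map `K[x, y]/(f(x), g(x, y)) → K[α][β]` with `x ↦ α` and `y ↦ β`. -/
def triangularQuotientToRootTower :
    MvPolynomial (Fin 2) K ⧸ triangularIdeal f g →ₐ[K] RootTower f g :=
  Ideal.Quotient.liftₐ _ (aeval ![RootTower.innerRoot f g, RootTower.outerRoot f g])
    (RootTower.aeval_roots_eq_zero_of_mem f g)

lemma triangularQuotientToRootTower_mk (p : MvPolynomial (Fin 2) K) :
    triangularQuotientToRootTower f g (Ideal.Quotient.mk _ p) =
      aeval ![RootTower.innerRoot f g, RootTower.outerRoot f g] p :=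
  rfl

/-- The presentation `K[x, y]/(f(x), g(x, y)) ≃ K[α][β]`, with `x ↦ α` and `y ↦ β`. -/
def triangularQuotientEquiv :
    (MvPolynomial (Fin 2) K ⧸ triangularIdeal f g) ≃ₐ[K] RootTower f g :=
  .ofAlgHom
    (triangularQuotientToRootTower f g)
    (RootTower.lift (aeval_mk_X_eq_zero f g) (aevalAeval_mk_X_eq_zero f g))
    (RootTower.algHom_ext (by simp [triangularQuotientToRootTower_mk])
      (by simp [triangularQuotientToRootTower_mk]))
    (Ideal.Quotient.algHom_ext K <| MvPolynomial.algHom_ext fun i => by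
      fin_cases i <;> simp [triangularQuotientToRootTower_mk])

lemma triangularQuotientEquiv_mk_monomial (i j : ℕ) :
    triangularQuotientEquiv f g (Ideal.Quotient.mk _ (X 0 ^ i * X 1 ^ j)) =
      RootTower.innerRoot f g ^ i * RootTower.outerRoot f g ^ j := by
  simp [triangularQuotientEquiv, triangularQuotientToRootTower_mk]

variable {f g}

theorem T_is_basis_general [Nontrivial K] (hf : f.Monic) (hg : g.Monic) :
    LinearIndependent K (fun p : Fin f.natDegree × Fin g.natDegree =>
      Ideal.Quotient.mk (triangularIdeal f g) (X 0 ^ p.1.val * X 1 ^ p.2.val)) ∧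
    Submodule.span K (Set.range fun p : Fin f.natDegree × Fin g.natDegree =>
      Ideal.Quotient.mk (triangularIdeal f g) (X 0 ^ p.1.val * X 1 ^ p.2.val)) = ⊤ ∧
    Module.finrank K (MvPolynomial (Fin 2) K ⧸ triangularIdeal f g) =
      f.natDegree * g.natDegree := by
  obtain ⟨b, hb⟩ := RootTower.exists_basis hf hg
  let c := b.map (triangularQuotientEquiv f g).symm.toLinearEquiv
  have hc : ⇑c = fun p => Ideal.Quotient.mk _ (X 0 ^ p.1.val * X 1 ^ p.2.val) := by
    funext p
    exact (AlgEquiv.symm_apply_eq _).mpr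
      ((hb p).trans (triangularQuotientEquiv_mk_monomial f g _ _).symm)
  rw [← hc]
  exact ⟨c.linearIndependent, c.span_eq, by simp [Module.finrank_eq_card_basis c]⟩

/-- The cubic relation of `R`, with `x` and `y` in the roles of `a` and `H`. -/
def cubicRelation : ℚ[X][Y] :=
  Y ^ 3 - Polynomial.C Polynomial.X * Y ^ 2 + Polynomial.C (Polynomial.X ^ 2) * Y
    - Polynomial.C (Polynomial.X ^ 3)

lemma natDegree_cubicRelation : cubicRelation.natDegree = 3 := by
  unfold cubicRelation; compute_degree!

lemma monic_cubicRelation : cubicRelation.Monic := by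
  unfold cubicRelation; monicity!

lemma J_eq_triangularIdeal : J = triangularIdeal (Polynomial.X ^ 4) cubicRelation := by
  simp [J, triangularIdeal, cubicRelation, aP, HP]

end TriangularQuotient

/-- **The 12 monomials `T i j = aⁱHʲ` (`0 ≤ i ≤ 3`, `0 ≤ j ≤ 2`) form a `ℚ`-basis
of `R = ℚ[a,H]/(a⁴, H³ − aH² + a²H − a³)`; in particular `R` has dimension 12
over `ℚ`.** -/
theorem T_is_basis :
    LinearIndependent ℚ (fun p : Fin 4 × Fin 3 => T p.1.val p.2.val) ∧
    Submodule.span ℚ (Set.range fun p : Fin 4 × Fin 3 => T p.1.val p.2.val) = ⊤ ∧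
    Module.finrank ℚ R = 12 := by
  have h := T_is_basis_general (Polynomial.monic_X_pow (R := ℚ) 4) monic_cubicRelation
  rw [Polynomial.natDegree_X_pow, natDegree_cubicRelation, ← J_eq_triangularIdeal] at h
  exact h

end
end

section
/- For all 0 ≤ i, k ≤ 3 and 0 ≤ j, l ≤ 2, the Poincaré pairing on the basis elements is given by ⟨T_{ij}, T_{kl}⟩ = 1 if (i+k, j+l) ∈ {(3,2), (2,3)}, and ⟨T_{ij}, T_{kl}⟩ = 0 otherwise. -/
/-!
Suppose `aⁿ⁺² = 0` and `∑ i < n + 2, hⁱ(-a)ⁿ⁺¹⁻ⁱ = 0`; the ring `R` is the case `n = 2`.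
Multiplying the second relation by `h + a` gives `hⁿ⁺² = (-a)ⁿ⁺² = 0`. So the only monomials outside
the basis `aⁱhʲ` (`i ≤ n + 1`, `j ≤ n`) that can be nonzero are `aᵐhⁿ⁺¹`, and by the second relation
`aᵐhⁿ⁺¹` equals `aᵐ⁺¹hⁿ` up to monomials of degree less than `n` in `h`, which the functional kills.
-/

open MvPolynomial

noncomputable section

section GeneralRank

variable {A M : Type*} [CommRing A] [AddCommGroup M] {a h : A} {n : ℕ}

theorem pow_eq_zero_of_geom_sum₂_eq_zero {x y : A} (hy : y ^ n = 0)
    (hsum : ∑ i ∈ Finset.range n, x ^ i * y ^ (n - 1 - i) = 0) : x ^ n = 0 := by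
  have hgeom : 0 * (x - y) = x ^ n - y ^ n := hsum ▸ geom_sum₂_mul x y n
  simpa only [zero_mul, hy, sub_zero, eq_comm] using hgeom

theorem map_mul_neg_pow_eq_zero (φ : A →+ M) {b : A} {k : ℕ} (hb : φ (b * a ^ k) = 0) :
    φ (b * (-a) ^ k) = 0 := by
  obtain hk | hk := neg_one_pow_eq_or A k
  · rwa [neg_pow, hk, one_mul]
  · rw [neg_pow, hk, neg_one_mul, mul_neg, map_neg, hb, neg_zero]

theorem pow_mul_pow_succ_eq_sub_sum
    (hrel : ∑ i ∈ Finset.range (n + 2), h ^ i * (-a) ^ (n + 1 - i) = 0) (m : ℕ) :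
    a ^ m * h ^ (n + 1) =
      a ^ (m + 1) * h ^ n - ∑ i ∈ Finset.range n, a ^ m * h ^ i * (-a) ^ (n + 1 - i) := by
  simp only [mul_assoc, ← Finset.mul_sum]
  rw [Finset.sum_range_succ, Finset.sum_range_succ, Nat.sub_self, Nat.add_sub_cancel_left] at hrel
  linear_combination a ^ m * hrel

theorem map_pow_mul_pow_succ (φ : A →+ M)
    (hrel : ∑ i ∈ Finset.range (n + 2), h ^ i * (-a) ^ (n + 1 - i) = 0)
    (hlow : ∀ i j, j < n → φ (a ^ i * h ^ j) = 0) (m : ℕ) :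
    φ (a ^ m * h ^ (n + 1)) = φ (a ^ (m + 1) * h ^ n) := by
  have hsum : ∑ i ∈ Finset.range n, φ (a ^ m * h ^ i * (-a) ^ (n + 1 - i)) = 0 := by
    refine Finset.sum_eq_zero fun i hi ↦ map_mul_neg_pow_eq_zero φ ?_
    rw [mul_right_comm, ← pow_add]
    exact hlow _ i (Finset.mem_range.1 hi)
  rw [pow_mul_pow_succ_eq_sub_sum hrel, map_sub, map_sum, hsum, sub_zero]

theorem map_pow_mul_pow (ha : a ^ (n + 2) = 0)
    (hrel : ∑ i ∈ Finset.range (n + 2), h ^ i * (-a) ^ (n + 1 - i) = 0)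
    (φ : A →+ M) (c : M)
    (hφ : ∀ i j, i ≤ n + 1 → j ≤ n → φ (a ^ i * h ^ j) = if i = n + 1 ∧ j = n then c else 0)
    (i j : ℕ) :
    φ (a ^ i * h ^ j) =
      if (i = n + 1 ∧ j = n) ∨ (i = n ∧ j = n + 1) then c else 0 := by
  have hbasis (i j : ℕ) (hj : j ≤ n) :
      φ (a ^ i * h ^ j) = if i = n + 1 ∧ j = n then c else 0 := by
    obtain hi | hi := le_or_gt i (n + 1)
    · exact hφ i j hi hj
    · rw [pow_eq_zero_of_le hi ha, zero_mul, map_zero, if_neg (by omega)]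
  have hlow (i j : ℕ) (hj : j < n) : φ (a ^ i * h ^ j) = 0 := by
    rw [hbasis i j hj.le, if_neg (by omega)]
  have hh : h ^ (n + 2) = 0 :=
    pow_eq_zero_of_geom_sum₂_eq_zero (by rw [neg_pow, ha, mul_zero]) hrel
  obtain hj | rfl | hj : j ≤ n ∨ j = n + 1 ∨ n + 2 ≤ j := by omega
  · rw [hbasis i j hj]
    exact if_congr (by omega) rfl rfl
  · rw [map_pow_mul_pow_succ φ hrel hlow, hbasis _ n le_rfl]
    exact if_congr (by omega) rfl rfl
  · rw [pow_eq_zero_of_le hj hh, mul_zero, map_zero, if_neg (by omega)]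

theorem poincare_pairing_on_basis_general (ha : a ^ (n + 2) = 0)
    (hrel : ∑ i ∈ Finset.range (n + 2), h ^ i * (-a) ^ (n + 1 - i) = 0)
    (φ : A →+ M) (c : M)
    (hφ : ∀ i j, i ≤ n + 1 → j ≤ n → φ (a ^ i * h ^ j) = if i = n + 1 ∧ j = n then c else 0)
    (i j k l : ℕ) :
    φ (a ^ i * h ^ j * (a ^ k * h ^ l)) =
      if (i + k = n + 1 ∧ j + l = n) ∨ (i + k = n ∧ j + l = n + 1) then c else 0 := by
  rw [mul_mul_mul_comm, ← pow_add, ← pow_add, map_pow_mul_pow ha hrel φ c hφ]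

end GeneralRank

theorem T_eq_pow_mul_pow (i j : ℕ) :
    T i j = Ideal.Quotient.mk J aP ^ i * Ideal.Quotient.mk J HP ^ j := by
  rw [T, map_mul, map_pow, map_pow]

theorem mk_aP_pow_four : Ideal.Quotient.mk J aP ^ 4 = 0 := by
  rw [← map_pow, Ideal.Quotient.eq_zero_iff_mem]
  exact Ideal.subset_span (Set.mem_insert _ _)

theorem sum_mk_HP_pow_mul_neg_mk_aP_pow :
    ∑ i ∈ Finset.range 4, Ideal.Quotient.mk J HP ^ i * (-Ideal.Quotient.mk J aP) ^ (3 - i) = 0 := by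
  have hcubic : Ideal.Quotient.mk J (HP ^ 3 - aP * HP ^ 2 + aP ^ 2 * HP - aP ^ 3) = 0 :=
    Ideal.Quotient.eq_zero_iff_mem.2 (Ideal.subset_span (Set.mem_insert_of_mem _ rfl))
  simp only [map_sub, map_add, map_mul, map_pow] at hcubic
  simp only [Finset.sum_range_succ, Finset.sum_range_zero]
  linear_combination hcubic

/-- **Poincaré pairing on the basis.** Assuming the `T i j` (`i ≤ 3`, `j ≤ 2`)
form a `ℚ`-basis of `R`, and `Int : R →ₗ[ℚ] ℚ` is the linear functional with
`Int (T 3 2) = 1` and `Int (T i j) = 0` otherwise, the Poincaré pairing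
`⟨x, y⟩ = Int (x * y)` satisfies `⟨T i j, T k l⟩ = 1` iff
`(i + k, j + l) ∈ {(3,2), (2,3)}`, and `0` otherwise. -/
theorem poincare_pairing_on_basis
    (hli : LinearIndependent ℚ (fun p : Fin 4 × Fin 3 => T p.1.val p.2.val))
    (hsp : Submodule.span ℚ (Set.range fun p : Fin 4 × Fin 3 => T p.1.val p.2.val) = ⊤)
    (Int : R →ₗ[ℚ] ℚ)
    (hInt : ∀ i j, i ≤ 3 → j ≤ 2 →
      Int (T i j) = if i = 3 ∧ j = 2 then 1 else 0) :
    ∀ i k j l, i ≤ 3 → k ≤ 3 → j ≤ 2 → l ≤ 2 →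
      Int (T i j * T k l) =
        if (i + k = 3 ∧ j + l = 2) ∨ (i + k = 2 ∧ j + l = 3) then 1 else 0 := by
  simp only [T_eq_pow_mul_pow] at hInt ⊢
  exact fun i k j l _ _ _ _ ↦ poincare_pairing_on_basis_general mk_aP_pow_four
    sum_mk_HP_pow_mul_neg_mk_aP_pow Int.toAddMonoidHom 1 hInt i j k l

end
end

section
/- The Poincaré pairing ⟨x,y⟩ = ∫(xy) on R is a nondegenerate symmetric ℚ-bilinear form: if x ∈ R satisfies ⟨x,y⟩ = 0 for all y ∈ R, then x = 0. -/
/-!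
Pair `aⁱHʲ` with the monomial `a³⁻ᵏH²⁻ˡ` complementary to `aᵏHˡ`. If `j ≤ l`, the product has degree
at most `2` in `H`, so, as `a⁴ = 0`, it is zero or one of the monomials on which `∫` is prescribed,
and its integral is `1` if `(i, j) = (k, l)` and `0` otherwise. Ordered by the exponent of `H`, the
matrix of the pairing between the two families is therefore unitriangular, whatever the higher
powers of `H` are.
-/

open MvPolynomial

noncomputable section

theorem separatingLeft_of_triangular {K M N ι α : Type*} [CommSemiring K] [AddCommMonoid M]
    [Module K M] [AddCommMonoid N] [Module K N] [Finite ι] [Preorder α]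
    {B : M →ₗ[K] N →ₗ[K] K} {v : ι → M} {w : ι → N} (r : ι → α)
    (hspan : Submodule.span K (Set.range v) = ⊤)
    (hdiag : ∀ k, B (v k) (w k) ∈ nonZeroDivisors K)
    (htri : ∀ i k, i ≠ k → ¬ r k < r i → B (v i) (w k) = 0) :
    B.SeparatingLeft := by
  intro x hx
  have := Fintype.ofFinite ι
  have hmem : x ∈ Submodule.span K (Set.range v) := hspan ▸ Submodule.mem_top
  obtain ⟨c, rfl⟩ := (Submodule.mem_span_range_iff_exists_fun K).mp hmem
  suffices hc : ∀ i, c i = 0 by simp only [hc, zero_smul, Finset.sum_const_zero]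
  by_contra! hne
  obtain ⟨k, hck, hmax⟩ := (Set.toFinite {i | c i ≠ 0}).exists_maximalFor r _ hne
  have hother : ∀ i, i ≠ k → c i * B (v i) (w k) = 0 := by
    intro i hik
    by_cases hlt : r k < r i
    · have hci : c i = 0 := by_contra fun hci => hlt.not_ge (hmax hci hlt.le)
      rw [hci, zero_mul]
    · rw [htri i k hik hlt, mul_zero]
  have hdiag_term : c k * B (v k) (w k) = 0 := by
    rw [← Fintype.sum_eq_single k hother, ← hx (w k)]
    simp only [map_sum, map_smul, LinearMap.sum_apply, LinearMap.smul_apply, smul_eq_mul]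
  exact hck ((mul_right_mem_nonZeroDivisors_eq_zero_iff (hdiag k)).mp hdiag_term)

section TopMonomialFunctional

variable {K A : Type*} [CommSemiring K] [CommSemiring A] [Algebra K A] {a b : A} {d e : ℕ}

theorem apply_pow_mul_pow_of_pow_eq_zero (ha : a ^ (d + 1) = 0) {φ : A →ₗ[K] K}
    (hφ : ∀ i j, i ≤ d → j ≤ e → φ (a ^ i * b ^ j) = if i = d ∧ j = e then 1 else 0)
    (i : ℕ) {j : ℕ} (hj : j ≤ e) :
    φ (a ^ i * b ^ j) = if i = d ∧ j = e then 1 else 0 := by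
  rcases le_or_gt i d with hi | hi
  · exact hφ i j hi hj
  · rw [pow_eq_zero_of_le hi ha, zero_mul, map_zero, if_neg fun hid => hi.ne' hid.1]

theorem apply_monomial_mul_rev (ha : a ^ (d + 1) = 0) {φ : A →ₗ[K] K}
    (hφ : ∀ i j, i ≤ d → j ≤ e → φ (a ^ i * b ^ j) = if i = d ∧ j = e then 1 else 0)
    {p q : Fin (d + 1) × Fin (e + 1)} (hpq : p.2 ≤ q.2) :
    φ (a ^ p.1.val * b ^ p.2.val * (a ^ q.1.rev.val * b ^ q.2.rev.val)) =
      if p = q then 1 else 0 := by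
  have hdeg : p.2.val + q.2.rev.val ≤ e := by grind
  have htop : p.1.val + q.1.rev.val = d ∧ p.2.val + q.2.rev.val = e ↔ p = q := by
    simp only [Prod.ext_iff, Fin.ext_iff, Fin.val_rev]
    omega
  rw [mul_mul_mul_comm, ← pow_add, ← pow_add, apply_pow_mul_pow_of_pow_eq_zero ha hφ _ hdeg]
  simp only [htop]

theorem poincare_pairing_nondegenerate_general (ha : a ^ (d + 1) = 0)
    (hspan : Submodule.span K
      (Set.range fun p : Fin (d + 1) × Fin (e + 1) => a ^ p.1.val * b ^ p.2.val) = ⊤)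
    (φ : A →ₗ[K] K)
    (hφ : ∀ i j, i ≤ d → j ≤ e → φ (a ^ i * b ^ j) = if i = d ∧ j = e then 1 else 0) :
    (∀ x y : A, φ (x * y) = φ (y * x)) ∧
    (∀ x : A, (∀ y : A, φ (x * y) = 0) → x = 0) := by
  refine ⟨fun x y => by rw [mul_comm], ?_⟩
  have hsep : ((LinearMap.mul K A).compr₂ φ).SeparatingLeft := by
    refine separatingLeft_of_triangular (w := fun q => a ^ q.1.rev.val * b ^ q.2.rev.val)
      Prod.snd hspan (fun k => ?_) (fun i k hik hlt => ?_)
    · simp only [LinearMap.compr₂_apply, LinearMap.mul_apply',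
        apply_monomial_mul_rev ha hφ le_rfl, if_true, one_mem]
    · simp only [LinearMap.compr₂_apply, LinearMap.mul_apply',
        apply_monomial_mul_rev ha hφ (not_lt.mp hlt), if_neg hik]
  exact hsep

end TopMonomialFunctional

/-- **Nondegeneracy of the Poincaré pairing.** Assuming the `T i j`
(`i ≤ 3`, `j ≤ 2`) form a `ℚ`-basis of `R` and `Int : R →ₗ[ℚ] ℚ` is the linear
functional with `Int (T 3 2) = 1` and `Int (T i j) = 0` otherwise, the symmetric
bilinear pairing `⟨x, y⟩ = Int (x * y)` is nondegenerate: if `Int (x * y) = 0`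
for all `y`, then `x = 0`. -/
theorem poincare_pairing_nondegenerate
    (hli : LinearIndependent ℚ (fun p : Fin 4 × Fin 3 => T p.1.val p.2.val))
    (hsp : Submodule.span ℚ (Set.range fun p : Fin 4 × Fin 3 => T p.1.val p.2.val) = ⊤)
    (Int : R →ₗ[ℚ] ℚ)
    (hInt : ∀ i j, i ≤ 3 → j ≤ 2 →
      Int (T i j) = if i = 3 ∧ j = 2 then 1 else 0) :
    (∀ x y : R, Int (x * y) = Int (y * x)) ∧
    (∀ x : R, (∀ y : R, Int (x * y) = 0) → x = 0) := by
  simp only [T_eq_pow_mul_pow] at hsp hInt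
  exact poincare_pairing_nondegenerate_general mk_aP_pow_four hsp Int hInt

end
end

section
/- If N : ℕ⁴ → ℚ satisfies conditions (i)–(iv), then N_3(11,0,0) = 12960; that is, the number of rational planar cubics in ℙ³ meeting 11 general lines, as computed by the recursion, equals 12960. -/
/-!
Condition (i) determines `r` from `d`, `s` and `θ`, so `N` is really a function of three arguments,
and in the recursion the sum over `r₁` has a single nonzero term. Since `s₁ + s₂ = s`, the values
with `s = 0` are determined among themselves, and by (ii) only `θ ≤ 3` matters: each degree has
just four values. They follow from the reduced recursion in increasing degree and, within a degree,
in decreasing `θ`, starting from the one line that meets two given lines and lies in a given plane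
(`d = 1`, `θ = 3`). For `θ = 3, 2, 1, 0` they are

* `d = 1` (lines): `1, 2, 2, 0`;
* `d = 2` (conics): `1, 8, 34, 92`;
* `d = 3` (cubics): `12, 216, 2040, 12960`.
-/

open Finset

noncomputable section

/-- The binomial coefficient `C(a, b)` with the convention `C(a, b) = 0` when
`b < 0` or `b > a` (the latter is automatic for `Nat.choose`). -/
def C (a : ℕ) (b : ℤ) : ℚ := if 0 ≤ b then (a.choose b.toNat : ℚ) else 0

/-- `SatN N` says that `N : ℕ⁴ → ℚ`, written `N d r s θ`, satisfies:
(i) `N d r s θ = 0` unless `d ≥ 1` and `r + 2s + θ = 3d + 2`;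
(ii) `N d r s θ = 0` if `s > 3` or `θ > 3`;
(iii) for `r ≤ 2`, `N d r s θ = 1` if
`(d,r,s,θ) ∈ {(1,0,2,1), (1,2,1,1), (1,1,1,2), (1,2,0,3), (2,2,3,0)}`
and `0` otherwise;
(iv) for `d ≥ 1` and `r ≥ 3`, the recursion
`N d r s θ = 2d·N d (r−1) s (θ+1) − 2d²·N d (r−2) s (θ+2)
  + ∑_{d₁+d₂=d, d₁,d₂>0} ∑_{r₁+r₂=r−1} ∑_{s₁+s₂=s} ∑_{θ₁+θ₂=θ+3}
    (d₁²d₂²·C(r−3, r₁−1) − d₁³d₂·C(r−3, r₁))·C(s, s₁)·N d₁ r₁ s₁ θ₁·N d₂ r₂ s₂ θ₂`. -/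
def SatN (N : ℕ → ℕ → ℕ → ℕ → ℚ) : Prop :=
  (∀ d r s θ, ¬(1 ≤ d ∧ r + 2 * s + θ = 3 * d + 2) → N d r s θ = 0) ∧
  (∀ d r s θ, (3 < s ∨ 3 < θ) → N d r s θ = 0) ∧
  (∀ d r s θ, r ≤ 2 →
    N d r s θ =
      if (d, r, s, θ) = (1, 0, 2, 1) ∨ (d, r, s, θ) = (1, 2, 1, 1) ∨
          (d, r, s, θ) = (1, 1, 1, 2) ∨ (d, r, s, θ) = (1, 2, 0, 3) ∨
          (d, r, s, θ) = (2, 2, 3, 0) then 1 else 0) ∧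
  (∀ d r s θ, 1 ≤ d → 3 ≤ r →
    N d r s θ =
      2 * (d : ℚ) * N d (r - 1) s (θ + 1) - 2 * (d : ℚ) ^ 2 * N d (r - 2) s (θ + 2)
        + ∑ d₁ ∈ Finset.Ioo 0 d, ∑ r₁ ∈ Finset.range r,
            ∑ s₁ ∈ Finset.range (s + 1), ∑ θ₁ ∈ Finset.range (θ + 4),
            ((d₁ : ℚ) ^ 2 * ((d - d₁ : ℕ) : ℚ) ^ 2 * C (r - 3) ((r₁ : ℤ) - 1)
                - (d₁ : ℚ) ^ 3 * ((d - d₁ : ℕ) : ℚ) * C (r - 3) (r₁ : ℤ))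
              * C s (s₁ : ℤ)
              * N d₁ r₁ s₁ θ₁ * N (d - d₁) (r - 1 - r₁) (s - s₁) (θ + 3 - θ₁))

theorem C_natCast (a b : ℕ) : C a b = a.choose b := by simp [C]

/-- The value of `N` at the only `r` allowed by (i), `r = 3d + 2 - 2s - θ`: the number of planar
rational curves of degree `d` meeting `s` points and `r` lines, under `θ` conditions on the plane.
Where the subtraction truncates the value is `0`, see `SatN.curveCount_eq_zero_of_lt`. -/
def curveCount (N : ℕ → ℕ → ℕ → ℕ → ℚ) (d s θ : ℕ) : ℚ := N d (3 * d + 2 - 2 * s - θ) s θ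

theorem eq_curveCount (N : ℕ → ℕ → ℕ → ℕ → ℚ) {d r s θ : ℕ} (h : r + 2 * s + θ = 3 * d + 2) :
    N d r s θ = curveCount N d s θ := by
  rw [curveCount, show 3 * d + 2 - 2 * s - θ = r by omega]

namespace SatN

variable {N : ℕ → ℕ → ℕ → ℕ → ℚ}

theorem eq_zero_of_ne (hN : SatN N) {d r s θ : ℕ} (h : r + 2 * s + θ ≠ 3 * d + 2) :
    N d r s θ = 0 :=
  hN.1 d r s θ fun h' => h h'.2

theorem curveCount_eq_zero_of_lt (hN : SatN N) {d s θ : ℕ} (h : 3 * d + 2 < 2 * s + θ) :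
    curveCount N d s θ = 0 :=
  hN.eq_zero_of_ne (by omega)

theorem curveCount_eq_zero_of_three_lt (hN : SatN N) {d s θ : ℕ} (h : 3 < θ) :
    curveCount N d s θ = 0 :=
  hN.2.1 _ _ _ _ (.inr h)

theorem sum_range_eq_curveCount_mul (hN : SatN N) (w : ℕ → ℚ) {d₁ d₂ r s₁ s₂ θ₁ θ₂ : ℕ}
    (h : r + 2 * (s₁ + s₂) + (θ₁ + θ₂) = 3 * (d₁ + d₂) + 5) :
    ∑ r₁ ∈ range r, w r₁ * N d₁ r₁ s₁ θ₁ * N d₂ (r - 1 - r₁) s₂ θ₂ =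
      w (3 * d₁ + 2 - 2 * s₁ - θ₁) * curveCount N d₁ s₁ θ₁ * curveCount N d₂ s₂ θ₂ := by
  set R := 3 * d₁ + 2 - 2 * s₁ - θ₁
  have off_support (r₁ : ℕ) (hne : r₁ ≠ R) : N d₁ r₁ s₁ θ₁ = 0 := hN.eq_zero_of_ne (by omega)
  by_cases h₁ : 3 * d₁ + 2 < 2 * s₁ + θ₁
  · have first_zero (r₁ : ℕ) : N d₁ r₁ s₁ θ₁ = 0 := hN.eq_zero_of_ne (by omega)
    simp [first_zero, hN.curveCount_eq_zero_of_lt h₁]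
  by_cases h₂ : 3 * d₂ + 2 < 2 * s₂ + θ₂
  · have second_zero (r₂ : ℕ) : N d₂ r₂ s₂ θ₂ = 0 := hN.eq_zero_of_ne (by omega)
    simp [second_zero, hN.curveCount_eq_zero_of_lt h₂]
  rw [sum_eq_single_of_mem R (mem_range.2 (by omega)) fun r₁ _ hne => by simp [off_support r₁ hne],
    eq_curveCount N (r := R) (by omega), eq_curveCount N (r := r - 1 - R) (by omega)]

theorem sum_range_eq_sum_Icc (hN : SatN N) (w : ℕ → ℚ) (d₁ d₂ s₁ s₂ θ : ℕ) :
    ∑ θ₁ ∈ range (θ + 4),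
        w θ₁ * curveCount N d₁ s₁ θ₁ * curveCount N d₂ s₂ (θ + 3 - θ₁) =
      ∑ θ₁ ∈ Icc θ 3, w θ₁ * curveCount N d₁ s₁ θ₁ * curveCount N d₂ s₂ (θ + 3 - θ₁) := by
  refine (sum_subset (fun θ₁ h => ?_) fun θ₁ _ h => ?_).symm
  · simp only [mem_Icc, mem_range] at h ⊢
    omega
  · obtain h | h : 3 < θ₁ ∨ 3 < θ + 3 - θ₁ := by
      simp only [mem_Icc] at h
      omega
    all_goals simp [hN.curveCount_eq_zero_of_three_lt h]

theorem curveCount_rec (hN : SatN N) {d s θ : ℕ} (h : 2 * s + θ < 3 * d) :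
    curveCount N d s θ =
      2 * d * curveCount N d s (θ + 1) - 2 * d ^ 2 * curveCount N d s (θ + 2) +
        ∑ d₁ ∈ Ioo 0 d, ∑ s₁ ∈ range (s + 1), ∑ θ₁ ∈ Icc θ 3,
          ((d₁ : ℚ) ^ 2 * (d - d₁ : ℕ) ^ 2 *
                C (3 * d - 1 - 2 * s - θ) ((3 * d₁ + 2 - 2 * s₁ - θ₁ : ℕ) - 1) -
              (d₁ : ℚ) ^ 3 * (d - d₁ : ℕ) *
                C (3 * d - 1 - 2 * s - θ) (3 * d₁ + 2 - 2 * s₁ - θ₁ : ℕ)) *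
            s.choose s₁ * curveCount N d₁ s₁ θ₁ * curveCount N (d - d₁) (s - s₁) (θ + 3 - θ₁) := by
  rw [curveCount, hN.2.2.2 d _ s θ (by omega) (by omega), eq_curveCount N (by omega),
    eq_curveCount N (by omega)]
  congr 1
  refine sum_congr rfl fun d₁ hd₁ => ?_
  rw [sum_comm]
  refine sum_congr rfl fun s₁ hs₁ => ?_
  rw [sum_comm, ← hN.sum_range_eq_sum_Icc]
  refine sum_congr rfl fun θ₁ hθ₁ => ?_
  rw [mem_Ioo] at hd₁
  rw [mem_range] at hs₁ hθ₁
  rw [← hN.sum_range_eq_curveCount_mul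
    (fun r₁ => ((d₁ : ℚ) ^ 2 * (d - d₁ : ℕ) ^ 2 * C _ ((r₁ : ℤ) - 1) -
      (d₁ : ℚ) ^ 3 * (d - d₁ : ℕ) * C _ r₁) * s.choose s₁)
    (r := 3 * d + 2 - 2 * s - θ) (by omega)]
  simp only [C_natCast s,
    show 3 * d + 2 - 2 * s - θ - 3 = 3 * d - 1 - 2 * s - θ by omega]

theorem curveCount_rec_s_zero (hN : SatN N) {d θ : ℕ} (h : θ < 3 * d) :
    curveCount N d 0 θ =
      2 * d * curveCount N d 0 (θ + 1) - 2 * d ^ 2 * curveCount N d 0 (θ + 2) +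
        ∑ d₁ ∈ Ioo 0 d, ∑ θ₁ ∈ Icc θ 3,
          ((d₁ : ℚ) ^ 2 * (d - d₁ : ℕ) ^ 2 * (3 * d - 1 - θ).choose (3 * d₁ + 1 - θ₁) -
              (d₁ : ℚ) ^ 3 * (d - d₁ : ℕ) * (3 * d - 1 - θ).choose (3 * d₁ + 2 - θ₁)) *
            curveCount N d₁ 0 θ₁ * curveCount N (d - d₁) 0 (θ + 3 - θ₁) := by
  rw [hN.curveCount_rec (by omega)]
  congr 1
  refine sum_congr rfl fun d₁ hd₁ => ?_
  rw [sum_range_one]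
  refine sum_congr rfl fun θ₁ hθ₁ => ?_
  rw [mem_Ioo] at hd₁
  rw [mem_Icc] at hθ₁
  have pred_cast : ((3 * d₁ + 2 - 2 * 0 - θ₁ : ℕ) : ℤ) - 1 = (3 * d₁ + 1 - θ₁ : ℕ) := by omega
  rw [pred_cast, C_natCast, C_natCast]
  simp

theorem curveCount_one_zero_rec (hN : SatN N) {θ : ℕ} (h : θ < 3) :
    curveCount N 1 0 θ = 2 * curveCount N 1 0 (θ + 1) - 2 * curveCount N 1 0 (θ + 2) := by
  rw [hN.curveCount_rec_s_zero h, show Ioo 0 1 = ∅ from rfl]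
  simp

theorem curveCount_two_zero_rec (hN : SatN N) {θ : ℕ} (h : θ < 6) :
    curveCount N 2 0 θ =
      4 * curveCount N 2 0 (θ + 1) - 8 * curveCount N 2 0 (θ + 2) +
        ∑ θ₁ ∈ Icc θ 3, (((5 - θ).choose (4 - θ₁) : ℚ) - (5 - θ).choose (5 - θ₁)) *
          curveCount N 1 0 θ₁ * curveCount N 1 0 (θ + 3 - θ₁) := by
  rw [hN.curveCount_rec_s_zero h, show Ioo 0 2 = {1} from rfl]
  norm_num

theorem curveCount_three_zero_rec (hN : SatN N) {θ : ℕ} (h : θ < 9) :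
    curveCount N 3 0 θ =
      6 * curveCount N 3 0 (θ + 1) - 18 * curveCount N 3 0 (θ + 2) +
        ∑ θ₁ ∈ Icc θ 3, (4 * ((8 - θ).choose (4 - θ₁) : ℚ) - 2 * (8 - θ).choose (5 - θ₁)) *
          curveCount N 1 0 θ₁ * curveCount N 2 0 (θ + 3 - θ₁) +
        ∑ θ₁ ∈ Icc θ 3, (4 * ((8 - θ).choose (7 - θ₁) : ℚ) - 8 * (8 - θ).choose (8 - θ₁)) *
          curveCount N 2 0 θ₁ * curveCount N 1 0 (θ + 3 - θ₁) := by
  rw [hN.curveCount_rec_s_zero h, show Ioo 0 3 = {1, 2} from rfl, sum_pair (by norm_num),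
    ← add_assoc]
  norm_num

theorem curveCount_one_zero_three (hN : SatN N) : curveCount N 1 0 3 = 1 := by
  simp [curveCount, hN.2.2.1]

theorem curveCount_one_zero_two (hN : SatN N) : curveCount N 1 0 2 = 2 := by
  rw [hN.curveCount_one_zero_rec (by norm_num)]
  norm_num [hN.curveCount_one_zero_three, hN.curveCount_eq_zero_of_three_lt]

theorem curveCount_one_zero_one (hN : SatN N) : curveCount N 1 0 1 = 2 := by
  rw [hN.curveCount_one_zero_rec (by norm_num)]
  norm_num [hN.curveCount_one_zero_two, hN.curveCount_one_zero_three]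

theorem curveCount_one_zero_zero (hN : SatN N) : curveCount N 1 0 0 = 0 := by
  rw [hN.curveCount_one_zero_rec (by norm_num)]
  norm_num [hN.curveCount_one_zero_one, hN.curveCount_one_zero_two]

theorem curveCount_two_zero_three (hN : SatN N) : curveCount N 2 0 3 = 1 := by
  rw [hN.curveCount_two_zero_rec (by norm_num)]
  norm_num [hN.curveCount_eq_zero_of_three_lt, hN.curveCount_one_zero_three, sum_Icc_succ_top,
    Nat.choose]

theorem curveCount_two_zero_two (hN : SatN N) : curveCount N 2 0 2 = 8 := by
  rw [hN.curveCount_two_zero_rec (by norm_num)]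
  norm_num [hN.curveCount_two_zero_three, hN.curveCount_eq_zero_of_three_lt,
    hN.curveCount_one_zero_two, hN.curveCount_one_zero_three, sum_Icc_succ_top, Nat.choose]

theorem curveCount_two_zero_one (hN : SatN N) : curveCount N 2 0 1 = 34 := by
  rw [hN.curveCount_two_zero_rec (by norm_num)]
  norm_num [hN.curveCount_two_zero_two, hN.curveCount_two_zero_three, hN.curveCount_one_zero_one,
    hN.curveCount_one_zero_two, hN.curveCount_one_zero_three, sum_Icc_succ_top, Nat.choose]

theorem curveCount_two_zero_zero (hN : SatN N) : curveCount N 2 0 0 = 92 := by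
  rw [hN.curveCount_two_zero_rec (by norm_num)]
  norm_num [hN.curveCount_two_zero_one, hN.curveCount_two_zero_two, hN.curveCount_one_zero_zero,
    hN.curveCount_one_zero_one, hN.curveCount_one_zero_two, hN.curveCount_one_zero_three,
    sum_Icc_succ_top, Nat.choose]

theorem curveCount_three_zero_three (hN : SatN N) : curveCount N 3 0 3 = 12 := by
  rw [hN.curveCount_three_zero_rec (by norm_num)]
  norm_num [hN.curveCount_eq_zero_of_three_lt, hN.curveCount_one_zero_three,
    hN.curveCount_two_zero_three, sum_Icc_succ_top, Nat.choose]

theorem curveCount_three_zero_two (hN : SatN N) : curveCount N 3 0 2 = 216 := by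
  rw [hN.curveCount_three_zero_rec (by norm_num)]
  norm_num [hN.curveCount_three_zero_three, hN.curveCount_eq_zero_of_three_lt,
    hN.curveCount_one_zero_two, hN.curveCount_one_zero_three, hN.curveCount_two_zero_two,
    hN.curveCount_two_zero_three, sum_Icc_succ_top, Nat.choose]

theorem curveCount_three_zero_one (hN : SatN N) : curveCount N 3 0 1 = 2040 := by
  rw [hN.curveCount_three_zero_rec (by norm_num)]
  norm_num [hN.curveCount_three_zero_two, hN.curveCount_three_zero_three,
    hN.curveCount_one_zero_one, hN.curveCount_one_zero_two, hN.curveCount_one_zero_three,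
    hN.curveCount_two_zero_one, hN.curveCount_two_zero_two, hN.curveCount_two_zero_three,
    sum_Icc_succ_top, Nat.choose]

theorem curveCount_three_zero_zero (hN : SatN N) : curveCount N 3 0 0 = 12960 := by
  rw [hN.curveCount_three_zero_rec (by norm_num)]
  norm_num [hN.curveCount_three_zero_one, hN.curveCount_three_zero_two, hN.curveCount_one_zero_zero,
    hN.curveCount_one_zero_one, hN.curveCount_one_zero_two, hN.curveCount_one_zero_three,
    hN.curveCount_two_zero_zero, hN.curveCount_two_zero_one, hN.curveCount_two_zero_two,
    hN.curveCount_two_zero_three, sum_Icc_succ_top, Nat.choose]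

end SatN

/-- **The number of rational planar cubics in `ℙ³` through 11 general lines is
`12960`:** any `N` satisfying conditions (i)–(iv) has `N 3 11 0 0 = 12960`. -/
theorem planar_cubics_through_eleven_lines
    (N : ℕ → ℕ → ℕ → ℕ → ℚ) (hN : SatN N) : N 3 11 0 0 = 12960 := by
  rw [eq_curveCount N (by norm_num)]
  exact hN.curveCount_three_zero_zero

end
end
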